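/- arXiv:0709.1500 — 3 statements merged into one kernel-verified Lean document; each statement's English description precedes it below -/
import Mathlib

section
/- Suppose x^1,…,x^k are circuits of the incidence matrix of K_{3,m} (m ≥ 4) satisfying a primitive relation Σ_{i=1}^k h_i x^i = 0 with x^k = (a,u_{m−2},b,u_{m−1},c,u_m) and h_k odd. Then there exist k+2 circuits x̄^1,…,x̄^{k+2} of the incidence matrix of K_{3,m+1} satisfying a primitive relation Σ_i h̄_i x̄^i = 0 with x̄^{k+2} = (a,u_{m−1},b,u_m,c,u_{m+1}), h̄_i = 2h_i for i = 1,…,k−1, and h̄_{k+2} = h̄_{k+1} = h̄_k = h_k (in particular h̄_{k+2} is odd). -/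
/-!
Write `p, q, r, s` for the columns `u_{m-2}, u_{m-1}, u_m, u_{m+1}` of `K_{3,m+1}`. Inserting a
zero column at `q` turns a circuit `y` of `K_{3,m}` into a circuit `liftCol q y` of `K_{3,m+1}`
(`isCircuit_liftCol`), and turns `x^k` into `(a,p,b,r,c,s)`. The identity
`(a,p,b,q,c,s) + (a,p,b,r,c,q) + (a,q,b,r,c,s) = 2 (a,p,b,r,c,s)` (`cmat_add_add`) then shows that
the lifts of `x^1, …, x^{k-1}` with doubled coefficients and these three circuits, each with
coefficient `h_k`, satisfy a relation.

For primitivity, the restriction of any relation to the column `q` only involves the three new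
circuits and forces their coefficients to be equal, to `α` say. Deleting the column `q` leaves
a relation among the `x^i` in which `x^k` has coefficient `2α`, and such a relation is a multiple of
`h`, because the `x^i` other than `x^k` are independent. Hence the space of relations is a line
spanned by a vector without zero entries. Coprimality holds since a common divisor divides the odd
number `h_k`, so it is odd and divides every `h_i`.
-/

/-- A nonzero `3×m` integer matrix with entries in `{0,±1}` and zero row and column sums. -/
def GoodMat {m : ℕ} (x : Matrix (Fin 3) (Fin m) ℤ) : Prop :=
  x ≠ 0 ∧ (∀ i j, x i j = 0 ∨ x i j = 1 ∨ x i j = -1) ∧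
  (∀ i, ∑ j, x i j = 0) ∧ (∀ j, ∑ i, x i j = 0)

/-- The support of a `3×m` matrix, as a set of positions. -/
def matSupport {m : ℕ} (x : Matrix (Fin 3) (Fin m) ℤ) : Set (Fin 3 × Fin m) :=
  {p | x p.1 p.2 ≠ 0}

/-- Circuits of the incidence matrix of `K_{3,m}`, in their characterization as nonzero
`{0,±1}` matrices with zero row and column sums and inclusion-minimal support. -/
def IsCircuit3m {m : ℕ} (x : Matrix (Fin 3) (Fin m) ℤ) : Prop :=
  GoodMat x ∧ ∀ y : Matrix (Fin 3) (Fin m) ℤ, GoodMat y →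
    matSupport y ⊆ matSupport x → matSupport y = matSupport x

/-- A primitive relation `Σ hᵢ xᵢ = 0` on `3×m` integer matrices: the coefficients are
relatively prime positive integers and no `k-1` of the matrices satisfy a nontrivial
linear relation. -/
def IsPrimitiveRelMat {k m : ℕ} (h : Fin k → ℕ) (x : Fin k → Matrix (Fin 3) (Fin m) ℤ) : Prop :=
  (∀ i, 0 < h i) ∧ (∀ d : ℕ, (∀ i, d ∣ h i) → d = 1) ∧
  (∑ i, (h i : ℤ) • x i = 0) ∧
  (∀ j : Fin k, LinearIndependent ℚ
      (fun i : {i : Fin k // i ≠ j} => (x i.1).map ((↑) : ℤ → ℚ)))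

/-- The circuit `(a, u_p, b, u_q, c, u_r)` of `K_{3,m}` as a `3×m` matrix: `+1` at positions
`(a,p), (b,q), (c,r)` and `-1` at positions `(a,r), (b,p), (c,q)`. -/
def cmat {m : ℕ} (p q r : Fin m) : Matrix (Fin 3) (Fin m) ℤ :=
  fun i j =>
    (if i = 0 ∧ j = p then 1 else 0) + (if i = 1 ∧ j = q then 1 else 0) +
    (if i = 2 ∧ j = r then 1 else 0) - (if i = 0 ∧ j = r then 1 else 0) -
    (if i = 1 ∧ j = p then 1 else 0) - (if i = 2 ∧ j = q then 1 else 0)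

/-- The `3×(m+1)` matrix obtained from `y` by inserting a zero column at position `q`. -/
def liftCol {m : ℕ} (q : Fin (m + 1)) (y : Matrix (Fin 3) (Fin m) ℤ) :
    Matrix (Fin 3) (Fin (m + 1)) ℤ :=
  fun i => @Fin.insertNth m (fun _ => ℤ) q 0 (y i)

lemma liftCol_same {m : ℕ} (q : Fin (m + 1)) (y : Matrix (Fin 3) (Fin m) ℤ) (i : Fin 3) :
    liftCol q y i q = 0 := by
  simp [liftCol]

lemma liftCol_succAbove {m : ℕ} (q : Fin (m + 1)) (y : Matrix (Fin 3) (Fin m) ℤ) (i : Fin 3)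
    (j : Fin m) : liftCol q y i (q.succAbove j) = y i j := by
  simp [liftCol]

lemma goodMat_liftCol {m : ℕ} (q : Fin (m + 1)) (y : Matrix (Fin 3) (Fin m) ℤ) :
    GoodMat (liftCol q y) ↔ GoodMat y := by
  unfold GoodMat
  refine and_congr (not_congr ⟨fun h => ?_, fun h => ?_⟩) (and_congr ?_ (and_congr ?_ ?_))
  · ext i j
    rw [← liftCol_succAbove q y, h]
    rfl
  · ext i j
    rcases Fin.eq_self_or_eq_succAbove q j with rfl | ⟨j, rfl⟩
    · simp [liftCol_same]
    · simp [liftCol_succAbove, h]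
  · refine forall_congr' fun i => ?_
    rw [Fin.forall_iff_succAbove q]
    simp [liftCol_same, liftCol_succAbove]
  · refine forall_congr' fun i => ?_
    rw [Fin.sum_univ_succAbove _ q]
    simp [liftCol_same, liftCol_succAbove]
  · rw [Fin.forall_iff_succAbove q]
    simp [liftCol_same, liftCol_succAbove]

lemma isCircuit_liftCol {m : ℕ} (q : Fin (m + 1)) {y : Matrix (Fin 3) (Fin m) ℤ}
    (hy : IsCircuit3m y) : IsCircuit3m (liftCol q y) := by
  refine ⟨(goodMat_liftCol q y).2 hy.1, fun z hz hsub => ?_⟩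
  -- The support condition makes the column `q` of `z` vanish, so `z` is itself a lift.
  obtain ⟨w, rfl⟩ : ∃ w, z = liftCol q w := by
    refine ⟨Matrix.of fun i j => z i (q.succAbove j), ?_⟩
    ext i j
    rcases Fin.eq_self_or_eq_succAbove q j with rfl | ⟨j, rfl⟩
    · rw [liftCol_same]
      by_contra hne
      exact hsub (show (i, j) ∈ matSupport z from hne) (liftCol_same j y i)
    · rw [liftCol_succAbove, Matrix.of_apply]
  have hw := hy.2 w ((goodMat_liftCol q w).1 hz) (by
    rintro ⟨i, j⟩ hij
    have := @hsub (i, q.succAbove j) (by simpa [matSupport, liftCol_succAbove] using hij)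
    simpa [matSupport, liftCol_succAbove] using this)
  ext ⟨i, j⟩
  rcases Fin.eq_self_or_eq_succAbove q j with rfl | ⟨j, rfl⟩
  · simp [matSupport, liftCol_same]
  · have := Set.ext_iff.1 hw (i, j)
    simpa [matSupport, liftCol_succAbove] using this

lemma liftCol_cmat {m : ℕ} (q : Fin (m + 1)) (a b c : Fin m) :
    liftCol q (cmat a b c) = cmat (q.succAbove a) (q.succAbove b) (q.succAbove c) := by
  ext i j
  rcases Fin.eq_self_or_eq_succAbove q j with rfl | ⟨j, rfl⟩
  · simp [liftCol_same, cmat, Fin.ne_succAbove]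
  · simp [liftCol_succAbove, cmat]

lemma isCircuit_cmat {m : ℕ} {p q r : Fin m} (hpq : p ≠ q) (hqr : q ≠ r) (hpr : p ≠ r) :
    IsCircuit3m (cmat p q r) := by
  refine ⟨⟨fun h => ?_, fun i j => ?_, fun i => ?_, fun j => ?_⟩, fun y hy hsub => ?_⟩
  · have := congrFun (congrFun h 0) p
    simp [cmat, hpr] at this
  · fin_cases i <;> simp only [cmat] <;> simp <;> split_ifs <;> simp_all
  · fin_cases i <;> simp [cmat, Finset.sum_sub_distrib]
  · rw [Fin.sum_univ_three]
    simp [cmat]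
  · obtain ⟨hne, -, hrow, hcol⟩ := hy
    have hz : ∀ i j, cmat p q r i j = 0 → y i j = 0 := fun i j h => by
      by_contra hne
      exact hsub (show (i, j) ∈ matSupport y from hne) h
    have c1 := hcol p
    have c2 := hcol q
    have c3 := hcol r
    rw [Fin.sum_univ_three] at c1 c2 c3
    have r0 := hrow 0
    rw [Fintype.sum_eq_add p r hpr (fun j hj => hz 0 j (by simp [cmat, hj.1, hj.2]))] at r0
    have r1 := hrow 1
    rw [Fintype.sum_eq_add p q hpq (fun j hj => hz 1 j (by simp [cmat, hj.1, hj.2]))] at r1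
    have z1 := hz 2 p (by simp [cmat, hpq, hpr])
    have z2 := hz 0 q (by simp [cmat, hpq.symm, hqr])
    have z3 := hz 1 r (by simp [cmat, hpr.symm, hqr.symm])
    -- The zero sums propagate the entry at `(a, p)` around the hexagon.
    have key : ∀ i j, y i j = y 0 p * cmat p q r i j := by
      intro i j
      by_cases hjp : j = p
      · subst hjp
        fin_cases i <;> simp [cmat, hpq, hpr] <;> linarith
      by_cases hjq : j = q
      · subst hjq
        fin_cases i <;> simp [cmat, hpq.symm, hqr] <;> linarith
      by_cases hjr : j = r
      · subst hjr
        fin_cases i <;> simp [cmat, hpr.symm, hqr.symm] <;> linarith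
      have h0 : cmat p q r i j = 0 := by simp [cmat, hjp, hjq, hjr]
      rw [hz i j h0, h0, mul_zero]
    have ht : y 0 p ≠ 0 := by
      intro h0
      apply hne
      ext i j
      rw [key, h0, zero_mul]
      rfl
    ext ⟨i, j⟩
    simp only [matSupport, Set.mem_ofPred_eq]
    rw [key i j]
    simp [ht]

lemma cmat_add_add {m : ℕ} (p q r s : Fin m) (i : Fin 3) (j : Fin m) :
    cmat p q s i j + cmat p r q i j + cmat q r s i j = 2 * cmat p r s i j := by
  unfold cmat
  ring

/-- Every subfamily omitting one index is independent iff a linear relation with some zero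
coefficient is trivial; the relation is written entry by entry. -/
lemma linInd_iff {k m : ℕ} (x : Fin k → Matrix (Fin 3) (Fin m) ℤ) :
    (∀ j : Fin k, LinearIndependent ℚ
      (fun i : {i : Fin k // i ≠ j} => (x i.1).map ((↑) : ℤ → ℚ))) ↔
    ∀ c : Fin k → ℚ, (∀ a b, ∑ i, c i * (x i a b : ℚ) = 0) → ∀ j, c j = 0 → ∀ i, c i = 0 := by
  have hsum : ∀ (c : Fin k → ℚ) (j : Fin k), c j = 0 → ∀ a b,
      ∑ i : {i : Fin k // i ≠ j}, c i * (x i a b : ℚ) = ∑ i, c i * (x i a b : ℚ) := by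
    intro c j hj a b
    have hF : ∀ F : Fin k → ℚ, F j = 0 → ∑ i : {i : Fin k // i ≠ j}, F i = ∑ i, F i := by
      intro F hF
      rw [← Finset.sum_erase Finset.univ hF]
      exact (Finset.sum_subtype _ (by simp) F).symm
    exact hF (fun i => c i * (x i a b : ℚ)) (by simp [hj])
  simp only [Fintype.linearIndependent_iff]
  constructor
  · intro H c hc j hj i
    by_cases hij : i = j
    · rw [hij, hj]
    refine H j (fun i => c i) ?_ ⟨i, hij⟩
    ext a b
    rw [Matrix.sum_apply]
    simpa using (hsum c j hj a b).trans (hc a b)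
  · intro H j g hg i
    set c : Fin k → ℚ := fun i => if h : i ≠ j then g ⟨i, h⟩ else 0 with hcdef
    have hcj : c j = 0 := by simp [hcdef]
    have hext : ∀ i : {i : Fin k // i ≠ j}, c i = g i := fun i => by simp [hcdef, i.2]
    rw [← hext]
    refine H c (fun a b => ?_) j hcj i
    rw [← hsum c j hcj]
    have := congrFun (congrFun hg a) b
    rw [Matrix.sum_apply] at this
    simp only [hext]
    simpa using this

/-- The main lemma: a primitive relation on `k` circuits of `K_{3,m}` whose last circuit is
`(a,u_{m-2},b,u_{m-1},c,u_m)` with odd last coefficient lifts to a primitive relation on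
`k+2` circuits of `K_{3,m+1}` whose last circuit is `(a,u_{m-1},b,u_m,c,u_{m+1})`, with
coefficients doubled except the last three, which all equal the old (odd) last one. -/
theorem lifting_lemma {m k : ℕ} (hm : 4 ≤ m) (hk : 1 ≤ k)
    (x : Fin k → Matrix (Fin 3) (Fin m) ℤ) (h : Fin k → ℕ)
    (hcirc : ∀ i, IsCircuit3m (x i))
    (hprim : IsPrimitiveRelMat h x)
    (hlast : x ⟨k - 1, by omega⟩ = cmat ⟨m - 3, by omega⟩ ⟨m - 2, by omega⟩ ⟨m - 1, by omega⟩)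
    (hodd : Odd (h ⟨k - 1, by omega⟩)) :
    ∃ xb : Fin (k + 2) → Matrix (Fin 3) (Fin (m + 1)) ℤ,
      (∀ i, IsCircuit3m (xb i)) ∧
      xb ⟨k + 1, by omega⟩ = cmat ⟨m - 2, by omega⟩ ⟨m - 1, by omega⟩ ⟨m, by omega⟩ ∧
      IsPrimitiveRelMat
        (fun i : Fin (k + 2) =>
          if hi : (i : ℕ) < k - 1 then 2 * h ⟨i, by omega⟩ else h ⟨k - 1, by omega⟩) xb := by
  obtain ⟨n, rfl⟩ : ∃ n, k = n + 1 := ⟨k - 1, by omega⟩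
  obtain ⟨hpos, hcop, hrel, hind⟩ := hprim
  rw [linInd_iff] at hind
  change x (Fin.last n) = _ at hlast
  change Odd (h (Fin.last n)) at hodd
  obtain ⟨p, hp⟩ : ∃ p : Fin (m + 1), p = ⟨m - 3, by omega⟩ := ⟨_, rfl⟩
  obtain ⟨q, hq⟩ : ∃ q : Fin (m + 1), q = ⟨m - 2, by omega⟩ := ⟨_, rfl⟩
  obtain ⟨r, hr⟩ : ∃ r : Fin (m + 1), r = ⟨m - 1, by omega⟩ := ⟨_, rfl⟩
  obtain ⟨s, hs⟩ : ∃ s : Fin (m + 1), s = ⟨m, by omega⟩ := ⟨_, rfl⟩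
  have hpq : p ≠ q := by rw [hp, hq, Ne, Fin.mk.injEq]; omega
  have hpr : p ≠ r := by rw [hp, hr, Ne, Fin.mk.injEq]; omega
  have hps : p ≠ s := by rw [hp, hs, Ne, Fin.mk.injEq]; omega
  have hqr : q ≠ r := by rw [hq, hr, Ne, Fin.mk.injEq]; omega
  have hqs : q ≠ s := by rw [hq, hs, Ne, Fin.mk.injEq]; omega
  have hrs : r ≠ s := by rw [hr, hs, Ne, Fin.mk.injEq]; omega
  have hX : liftCol q (x (Fin.last n)) = cmat p r s := by
    rw [hlast, liftCol_cmat]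
    congr 1
    · rw [hp, hq, Fin.succAbove_of_castSucc_lt _ _ (by rw [Fin.lt_def]; simp; omega)]
      rfl
    · rw [hr, hq, Fin.succAbove_of_le_castSucc _ _ (by rw [Fin.le_def]; simp)]
      ext; simp; omega
    · rw [hs, hq, Fin.succAbove_of_le_castSucc _ _ (by rw [Fin.le_def]; simp; omega)]
      ext; simp; omega
  rw [← hq, ← hr, ← hs]
  obtain ⟨xb, hxb⟩ : ∃ xb : Fin (n + 3) → Matrix (Fin 3) (Fin (m + 1)) ℤ,
      xb = Fin.snoc (Fin.snoc (Fin.snoc (fun i : Fin n => liftCol q (x i.castSucc))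
        (cmat p q s)) (cmat p r q)) (cmat q r s) := ⟨_, rfl⟩
  have x3 : xb (Fin.last (n + 2)) = cmat q r s := by simp [hxb]
  have x2 : xb (Fin.last (n + 1)).castSucc = cmat p r q := by simp [hxb]
  have x1 : xb (Fin.last n).castSucc.castSucc = cmat p q s := by simp [hxb]
  have x0 : ∀ i : Fin n, xb i.castSucc.castSucc.castSucc = liftCol q (x i.castSucc) := by
    simp [hxb]
  -- Entrywise decomposition of any combination of the lifted family.
  have hdecomp : ∀ (c : Fin (n + 3) → ℚ) (a b), ∑ i, c i * (xb i a b : ℚ) =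
      ∑ i : Fin n, c i.castSucc.castSucc.castSucc * (liftCol q (x i.castSucc) a b : ℚ) +
        c (Fin.last n).castSucc.castSucc * (cmat p q s a b : ℚ) +
        c (Fin.last (n + 1)).castSucc * (cmat p r q a b : ℚ) +
        c (Fin.last (n + 2)) * (cmat q r s a b : ℚ) := by
    intro c a b
    rw [Fin.sum_univ_castSucc, Fin.sum_univ_castSucc, Fin.sum_univ_castSucc]
    simp only [x0, x1, x2, x3]
  have hadd : ∀ a b, (cmat p q s a b : ℚ) + cmat p r q a b + cmat q r s a b
      = 2 * liftCol q (x (Fin.last n)) a b := by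
    intro a b
    rw [hX]
    exact_mod_cast cmat_add_add p q r s a b
  have hrel' : ∀ a b, ∑ i : Fin n, (h i.castSucc : ℚ) * (x i.castSucc a b : ℚ)
      + (h (Fin.last n) : ℚ) * (x (Fin.last n) a b : ℚ) = 0 := by
    intro a b
    have := congrFun (congrFun hrel a) b
    rw [Matrix.sum_apply, Fin.sum_univ_castSucc] at this
    simp only [Matrix.smul_apply, smul_eq_mul, Matrix.zero_apply] at this
    exact_mod_cast this
  have hlpos : (0 : ℚ) < h (Fin.last n) := by exact_mod_cast hpos _
  refine ⟨xb, fun i => ?_, x3, fun i => ?_, fun d hd => ?_, ?_, ?_⟩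
  · induction i using Fin.lastCases with
    | last => rw [x3]; exact isCircuit_cmat hqr hrs hqs
    | cast i =>
      induction i using Fin.lastCases with
      | last => rw [x2]; exact isCircuit_cmat hpr hqr.symm hpq
      | cast i =>
        induction i using Fin.lastCases with
        | last => rw [x1]; exact isCircuit_cmat hpq hqs hps
        | cast i => rw [x0]; exact isCircuit_liftCol q (hcirc _)
  · dsimp only
    split_ifs
    · exact Nat.mul_pos two_pos (hpos _)
    · exact hpos _
  · have hl : d ∣ h (Fin.last n) := by
      have := hd (Fin.last (n + 2))
      simp at this
      exact this
    apply hcop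
    intro i
    induction i using Fin.lastCases with
    | last => exact hl
    | cast i =>
      have h2 : d ∣ 2 * h i.castSucc := by
        have := hd i.castSucc.castSucc.castSucc
        simp at this
        exact this
      have hdodd : Odd d := hodd.of_dvd_nat hl
      exact (Nat.Coprime.dvd_mul_left (Nat.coprime_two_right.2 hdodd)).1 h2
  · ext a b
    rw [Matrix.sum_apply]
    simp only [Matrix.smul_apply, smul_eq_mul, Matrix.zero_apply]
    have hq' := hdecomp (fun i : Fin (n + 3) =>
      (((if hi : (i : ℕ) < n + 1 - 1 then 2 * h ⟨i, by omega⟩ else h ⟨n + 1 - 1, by omega⟩ : ℕ)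
        : ℤ) : ℚ)) a b
    have : ∀ y : ℤ, (y : ℚ) = 0 → y = 0 := fun y hy => by exact_mod_cast hy
    apply this
    push_cast at hq' ⊢
    refine hq'.trans ?_
    have hsplit : ∑ i : Fin n, 2 * (h i.castSucc : ℚ) * (liftCol q (x i.castSucc) a b : ℚ)
        + h (Fin.last n) * (2 * liftCol q (x (Fin.last n)) a b : ℚ) = 0 := by
      rcases Fin.eq_self_or_eq_succAbove q b with rfl | ⟨b, rfl⟩
      · simp [liftCol_same]
      · simp only [liftCol_succAbove, mul_assoc, ← Finset.mul_sum]
        linear_combination 2 * hrel' a b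
    rw [← hadd] at hsplit
    simp
    change ∑ i : Fin n, 2 * (h i.castSucc : ℚ) * (liftCol q (x i.castSucc) a b : ℚ)
      + h (Fin.last n) * _ + h (Fin.last n) * _ + h (Fin.last n) * _ = 0
    linear_combination hsplit
  · rw [linInd_iff]
    intro c hc j hj
    simp only [hdecomp] at hc
    -- The column `q` forces the three new coefficients to agree.
    have e1 := hc 0 q
    have e2 := hc 1 q
    simp [liftCol_same, cmat, hpq.symm, hqr, hqs] at e1 e2
    set α := c (Fin.last (n + 2)) with hα
    have e3 : c (Fin.last (n + 1)).castSucc = α := by linarith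
    have e4 : c (Fin.last n).castSucc.castSucc = α := by linarith
    -- Subtracting a multiple of the given relation removes the last circuit.
    have hlin := hind (Fin.snoc (fun i : Fin n => c i.castSucc.castSucc.castSucc
      - 2 * α / h (Fin.last n) * h i.castSucc) 0 : Fin (n + 1) → ℚ) (by
        intro a b
        have h1 := hc a (q.succAbove b)
        have h2 := hadd a (q.succAbove b)
        have h3 := hrel' a b
        rw [e3, e4] at h1
        simp only [liftCol_succAbove] at h1 h2
        rw [Fin.sum_univ_castSucc]
        simp only [Fin.snoc_castSucc, Fin.snoc_last, sub_mul, Finset.sum_sub_distrib, mul_assoc,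
          ← Finset.mul_sum]
        have h4 : 2 * α / h (Fin.last n) * h (Fin.last n) = 2 * α := by field_simp
        linear_combination h1 - α * h2 - 2 * α / h (Fin.last n) * h3
          + (x (Fin.last n) a b : ℚ) * h4) (Fin.last n) (by simp)
    have hci : ∀ i : Fin n, c i.castSucc.castSucc.castSucc
        = 2 * α / h (Fin.last n) * h i.castSucc := by
      intro i
      have := hlin i.castSucc
      rw [Fin.snoc_castSucc] at this
      linarith
    have hα0 : α = 0 := by
      induction j using Fin.lastCases with
      | last => exact hj
      | cast j =>
        induction j using Fin.lastCases with
        | last => rw [← e3, hj]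
        | cast j =>
          induction j using Fin.lastCases with
          | last => rw [← e4, hj]
          | cast j =>
            rw [hci] at hj
            have : (h j.castSucc : ℚ) ≠ 0 := by exact_mod_cast (hpos _).ne'
            simpa [this, hlpos.ne'] using hj
    intro i
    induction i using Fin.lastCases with
    | last => exact hα0
    | cast i =>
      induction i using Fin.lastCases with
      | last => rw [e3, hα0]
      | cast i =>
        induction i using Fin.lastCases with
        | last => rw [e4, hα0]
        | cast i => rw [hci, hα0]; simp
end

section
/- For every m ≥ 4 there exist 2m−1 circuits x^1,…,x^{2m−1} of the incidence matrix of K_{3,m}, with x^{2m−1} = (a,u_{m−2},b,u_{m−1},c,u_m), satisfying a primitive relation Σ_i h_i x^i = 0 with h_{2m−1} = 7 and Σ_i h_i = 17·2^{m−3} − 7. -/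
/-- The matrix `x` is, up to sign, a circuit `cmat p q r` with distinct columns. -/
def IsHexagon {m : ℕ} (x : Matrix (Fin 3) (Fin m) ℤ) : Prop :=
  ∃ p q r : Fin m, p ≠ q ∧ p ≠ r ∧ q ≠ r ∧ (x = cmat p q r ∨ x = -cmat p q r)

/-! ### Hexagons are circuits -/

lemma goodMat_cmat {m : ℕ} {p q r : Fin m} (hpq : p ≠ q) (hpr : p ≠ r) (hqr : q ≠ r) :
    GoodMat (cmat p q r) := by
  refine ⟨fun h => ?_, fun i j => ?_, fun i => ?_, fun j => ?_⟩
  · have := congrFun (congrFun h 0) p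
    simp [cmat, hpr] at this
  · fin_cases i <;> simp only [cmat] <;> by_cases h1 : j = p <;> by_cases h2 : j = q <;>
      by_cases h3 : j = r <;> simp_all
  · fin_cases i <;> simp [cmat, Finset.sum_sub_distrib]
  · rw [Fin.sum_univ_three]
    simp [cmat]

lemma GoodMat.neg {m : ℕ} {x : Matrix (Fin 3) (Fin m) ℤ} (hx : GoodMat x) : GoodMat (-x) := by
  obtain ⟨h0, h1, h2, h3⟩ := hx
  refine ⟨neg_ne_zero.mpr h0, fun i j => ?_, fun i => ?_, fun j => ?_⟩
  · have := h1 i j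
    simp only [Matrix.neg_apply]
    omega
  · simp [h2]
  · simp [h3]

lemma matSupport_neg {m : ℕ} (x : Matrix (Fin 3) (Fin m) ℤ) :
    matSupport (-x) = matSupport x := by
  simp [matSupport]

/-- A matrix with zero row and column sums supported on a hexagon is a multiple of it: going
around the hexagon, each vanishing line sum forces consecutive entries to be opposite. -/
lemma eq_smul_cmat {m : ℕ} {p q r : Fin m} (hpq : p ≠ q) (hpr : p ≠ r) (hqr : q ≠ r)
    {y : Matrix (Fin 3) (Fin m) ℤ} (hr : ∀ i, ∑ j, y i j = 0) (hc : ∀ j, ∑ i, y i j = 0)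
    (hs : ∀ i j, cmat p q r i j = 0 → y i j = 0) : y = y 0 p • cmat p q r := by
  have z0 : ∀ j, j ≠ p ∧ j ≠ r → y 0 j = 0 := fun j hj => hs 0 j (by simp [cmat, hj])
  have z1 : ∀ j, j ≠ p ∧ j ≠ q → y 1 j = 0 := fun j hj => hs 1 j (by simp [cmat, hj])
  have z2 : ∀ j, j ≠ q ∧ j ≠ r → y 2 j = 0 := fun j hj => hs 2 j (by simp [cmat, hj])
  have r0 := hr 0
  have r1 := hr 1
  have r2 := hr 2
  rw [Fintype.sum_eq_add p r hpr z0] at r0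
  rw [Fintype.sum_eq_add p q hpq z1] at r1
  rw [Fintype.sum_eq_add q r hqr z2] at r2
  have cp := hc p
  have cq := hc q
  have cr := hc r
  rw [Fin.sum_univ_three] at cp cq cr
  have e1 := z0 q ⟨hpq.symm, hqr⟩
  have e2 := z1 r ⟨hpr.symm, hqr.symm⟩
  have e3 := z2 p ⟨hpq, hpr⟩
  ext i j
  by_cases h1 : j = p
  · subst h1
    fin_cases i <;> simp [cmat, hpq, hpr] <;> omega
  by_cases h2 : j = q
  · subst h2
    fin_cases i <;> simp [cmat, hpq.symm, hqr] <;> omega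
  by_cases h3 : j = r
  · subst h3
    fin_cases i <;> simp [cmat, hpr.symm, hqr.symm] <;> omega
  fin_cases i
  · simp [cmat, h1, h3, z0 j ⟨h1, h3⟩]
  · simp [cmat, h1, h2, z1 j ⟨h1, h2⟩]
  · simp [cmat, h2, h3, z2 j ⟨h2, h3⟩]

lemma IsHexagon.isCircuit {m : ℕ} {x : Matrix (Fin 3) (Fin m) ℤ} (hx : IsHexagon x) :
    IsCircuit3m x := by
  obtain ⟨p, q, r, hpq, hpr, hqr, hx⟩ := hx
  have hg := goodMat_cmat hpq hpr hqr
  have hsupp : matSupport x = matSupport (cmat p q r) := by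
    rcases hx with rfl | rfl
    · rfl
    · exact matSupport_neg _
  refine ⟨?_, fun y hy hsub => ?_⟩
  · rcases hx with rfl | rfl
    exacts [hg, hg.neg]
  · rw [hsupp] at hsub ⊢
    have key := eq_smul_cmat hpq hpr hqr hy.2.2.1 hy.2.2.2 (fun i j h => by
      by_contra hne
      exact (hsub (show (i, j) ∈ matSupport y from hne)) h)
    have ht : y 0 p ≠ 0 := fun h0 => hy.1 (by rw [key, h0, zero_smul])
    ext ⟨i, j⟩
    have hij : y i j = y 0 p * cmat p q r i j := by
      conv_lhs => rw [key]
      simp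
    simp [matSupport, hij, ht]

/-! ### Inserting a zero column -/

/-- The matrix obtained from `A` by inserting a zero column at position `s`. -/
def padCol {m : ℕ} (s : Fin (m + 1)) (A : Matrix (Fin 3) (Fin m) ℤ) :
    Matrix (Fin 3) (Fin (m + 1)) ℤ :=
  fun i => s.insertNth (α := fun _ => ℤ) 0 (A i)

@[simp] lemma padCol_same {m : ℕ} (s : Fin (m + 1)) (A : Matrix (Fin 3) (Fin m) ℤ) (i : Fin 3) :
    padCol s A i s = 0 := by
  simp [padCol]

@[simp] lemma padCol_succAbove {m : ℕ} (s : Fin (m + 1)) (A : Matrix (Fin 3) (Fin m) ℤ)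
    (i : Fin 3) (j : Fin m) : padCol s A i (s.succAbove j) = A i j := by
  simp [padCol]

lemma padCol_cmat {m : ℕ} (s : Fin (m + 1)) (p q r : Fin m) :
    padCol s (cmat p q r) = cmat (s.succAbove p) (s.succAbove q) (s.succAbove r) := by
  ext i j
  induction j using Fin.succAboveCases s with
  | x => simp [cmat, Fin.ne_succAbove]
  | p j => simp [cmat]

lemma padCol_neg {m : ℕ} (s : Fin (m + 1)) (A : Matrix (Fin 3) (Fin m) ℤ) :
    padCol s (-A) = -padCol s A := by
  ext i j
  induction j using Fin.succAboveCases s with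
  | x => simp
  | p j => simp

lemma IsHexagon.padCol {m : ℕ} {x : Matrix (Fin 3) (Fin m) ℤ} (hx : IsHexagon x)
    (s : Fin (m + 1)) : IsHexagon (padCol s x) := by
  obtain ⟨p, q, r, hpq, hpr, hqr, hx⟩ := hx
  refine ⟨s.succAbove p, s.succAbove q, s.succAbove r, by simpa, by simpa, by simpa, ?_⟩
  rcases hx with rfl | rfl
  · exact Or.inl (padCol_cmat ..)
  · exact Or.inr (by rw [padCol_neg, padCol_cmat])

/-! ### The inductive construction -/

/-- `x` and `h` describe a relation `∑ hᵢ xᵢ + 7 z = 0` with hexagons `xᵢ` and positive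
coefficients, to which every rational relation among the matrices `xᵢ, z` is proportional. The last
term is kept apart from the others, and relations are written entrywise. -/
structure RelData {n m : ℕ} (x : Fin n → Matrix (Fin 3) (Fin m) ℤ) (h : Fin n → ℕ)
    (z : Matrix (Fin 3) (Fin m) ℤ) : Prop where
  hexagon : ∀ i, IsHexagon (x i)
  pos : ∀ i, 0 < h i
  rel : ∀ a b, ∑ i, (h i : ℤ) * x i a b + 7 * z a b = 0
  unique : ∀ (c : Fin n → ℚ) (d : ℚ), (∀ a b, ∑ i, c i * x i a b + d * z a b = 0) →
    ∃ t : ℚ, (∀ i, c i = t * h i) ∧ d = t * 7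

/-- One inductive step: the relation is doubled and `2 H(p,q,r)` is replaced by
`H(p,q,s) + H(p,s,r) + H(s,q,r)`, where `s` is a new column. -/
lemma RelData.step {n m : ℕ} {x : Fin n → Matrix (Fin 3) (Fin m) ℤ} {h : Fin n → ℕ}
    {p q r : Fin m} (hpq : p ≠ q) (hpr : p ≠ r)
    (H : RelData x h (cmat p q r)) (s : Fin (m + 1)) :
    RelData
      (Fin.snoc (α := fun _ => Matrix (Fin 3) (Fin (m + 1)) ℤ)
        (Fin.snoc (α := fun _ => Matrix (Fin 3) (Fin (m + 1)) ℤ) (fun i => padCol s (x i))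
          (cmat (s.succAbove p) (s.succAbove q) s))
        (cmat (s.succAbove p) s (s.succAbove r)))
      (Fin.snoc (α := fun _ => ℕ) (Fin.snoc (α := fun _ => ℕ) (fun i => 2 * h i) 7) 7)
      (cmat s (s.succAbove q) (s.succAbove r)) := by
  have hs : ∀ j, s ≠ s.succAbove j := fun j => Fin.ne_succAbove s j
  have key : ∀ a j, cmat (s.succAbove p) (s.succAbove q) s a (s.succAbove j) +
      cmat (s.succAbove p) s (s.succAbove r) a (s.succAbove j) +
      cmat s (s.succAbove q) (s.succAbove r) a (s.succAbove j) = 2 * cmat p q r a j := by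
    intro a j
    simp only [cmat, Fin.succAbove_right_inj, (hs _).symm, and_false, if_false]
    ring
  have col1 : ∀ a, cmat (s.succAbove p) (s.succAbove q) s a s = ![-1, 0, 1] a := by
    intro a
    fin_cases a <;> simp [cmat, hs]
  have col2 : ∀ a, cmat (s.succAbove p) s (s.succAbove r) a s = ![0, 1, -1] a := by
    intro a
    fin_cases a <;> simp [cmat, hs]
  have col3 : ∀ a, cmat s (s.succAbove q) (s.succAbove r) a s = ![1, -1, 0] a := by
    intro a
    fin_cases a <;> simp [cmat, hs]
  refine ⟨?_, ?_, ?_, ?_⟩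
  · rw [Fin.forall_fin_succ', Fin.forall_fin_succ']
    simp only [Fin.snoc_castSucc, Fin.snoc_last]
    exact ⟨⟨fun i => (H.hexagon i).padCol s,
        _, _, _, by simpa using hpq, (hs _).symm, (hs _).symm, .inl rfl⟩,
      _, _, _, (hs _).symm, by simpa using hpr, hs _, .inl rfl⟩
  · rw [Fin.forall_fin_succ', Fin.forall_fin_succ']
    simp [H.pos]
  · intro a b
    simp only [Fin.sum_univ_castSucc, Fin.snoc_castSucc, Fin.snoc_last]
    induction b using Fin.succAboveCases s with
    | x =>
      rw [col1, col2, col3]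
      fin_cases a <;> simp
    | p j =>
      have h1 := H.rel a j
      have h2 := key a j
      simp only [padCol_succAbove]
      push_cast
      simp only [mul_assoc, ← Finset.mul_sum]
      linear_combination 2 * h1 + 7 * h2
  · intro c d hcd
    simp only [Fin.sum_univ_castSucc, Fin.snoc_castSucc, Fin.snoc_last] at hcd
    have h0 := hcd 0 s
    have h1 := hcd 1 s
    rw [col1, col2, col3] at h0 h1
    simp at h0 h1
    obtain ⟨t, ht, hd⟩ := H.unique (fun i => c i.castSucc.castSucc) (2 * d) (fun a j => by
      have h2 := hcd a (s.succAbove j)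
      have h3 : (_ : ℚ) = _ := congrArg (Int.cast : ℤ → ℚ) (key a j)
      push_cast at h3
      simp only [padCol_succAbove] at h2
      linear_combination h2 - d * h3 +
        (cmat (s.succAbove p) (s.succAbove q) s a (s.succAbove j) : ℚ) * h0 -
        (cmat (s.succAbove p) s (s.succAbove r) a (s.succAbove j) : ℚ) * h1)
    refine ⟨t / 2, ?_, by linarith⟩
    rw [Fin.forall_fin_succ', Fin.forall_fin_succ']
    simp only [Fin.snoc_castSucc, Fin.snoc_last]
    refine ⟨⟨fun i => ?_, ?_⟩, ?_⟩
    · rw [ht i]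
      push_cast
      ring
    · push_cast
      linarith
    · push_cast
      linarith

/-- The relation for `m = 4`. -/
lemma relData_base : RelData (n := 6) (m := 4)
    ![cmat 0 1 2, -cmat 0 2 1, -cmat 2 1 3, cmat 2 3 1, cmat 3 0 1, cmat 3 1 0]
    ![5, 2, 1, 6, 3, 3] (cmat 1 2 3) := by
  refine ⟨?_, by decide, by decide, ?_⟩
  · intro i
    fin_cases i
    · exact ⟨0, 1, 2, by decide, by decide, by decide, .inl rfl⟩
    · exact ⟨0, 2, 1, by decide, by decide, by decide, .inr rfl⟩
    · exact ⟨2, 1, 3, by decide, by decide, by decide, .inr rfl⟩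
    · exact ⟨2, 3, 1, by decide, by decide, by decide, .inl rfl⟩
    · exact ⟨3, 0, 1, by decide, by decide, by decide, .inl rfl⟩
    · exact ⟨3, 1, 0, by decide, by decide, by decide, .inl rfl⟩
  · intro c d hcd
    have e00 := hcd 0 0
    have e01 := hcd 0 1
    have e02 := hcd 0 2
    have e10 := hcd 1 0
    have e11 := hcd 1 1
    have e12 := hcd 1 2
    simp [Fin.sum_univ_succ, cmat, Fin.ext_iff] at e00 e01 e02 e10 e11 e12
    refine ⟨d / 7, ?_, by ring⟩
    intro i
    fin_cases i <;> simp <;> linarith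

lemma exists_relData (k : ℕ) :
    ∃ (x : Fin (2 * k + 6) → Matrix (Fin 3) (Fin (k + 4)) ℤ) (h : Fin (2 * k + 6) → ℕ),
      RelData x h (cmat ⟨k + 1, by omega⟩ ⟨k + 2, by omega⟩ ⟨k + 3, by omega⟩) ∧
      ∑ i, h i + 14 = 17 * 2 ^ (k + 1) := by
  induction k with
  | zero => exact ⟨_, _, relData_base, by decide⟩
  | succ k ih =>
    obtain ⟨x, h, H, hsum⟩ := ih
    have H' := H.step (by simp) (by simp) ⟨k + 2, by omega⟩
    have hq : (⟨k + 2, by omega⟩ : Fin (k + 5)).succAbove ⟨k + 2, by omega⟩ =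
        ⟨k + 3, by omega⟩ := by
      simp [Fin.succAbove]
    have hr : (⟨k + 2, by omega⟩ : Fin (k + 5)).succAbove ⟨k + 3, by omega⟩ =
        ⟨k + 4, by omega⟩ := by
      simp [Fin.succAbove, Fin.lt_def]
    rw [hq, hr] at H'
    refine ⟨_, _, H', ?_⟩
    refine (congrArg (· + 14) (Fin.sum_univ_castSucc (n := 2 * k + 7) _)).trans ?_
    rw [Fin.sum_univ_castSucc (n := 2 * k + 6)]
    simp only [Fin.snoc_castSucc, Fin.snoc_last, ← Finset.mul_sum]
    rw [pow_succ]
    omega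

/-- Appending the last term to the relation yields a primitive relation in the sense of
`IsPrimitiveRelMat`. -/
lemma RelData.isPrimitive {n m : ℕ} {x : Fin n → Matrix (Fin 3) (Fin m) ℤ} {h : Fin n → ℕ}
    {z : Matrix (Fin 3) (Fin m) ℤ} (H : RelData x h z) (hdvd : ¬ 7 ∣ ∑ i, h i) :
    IsPrimitiveRelMat (Fin.snoc (α := fun _ => ℕ) h 7)
      (Fin.snoc (α := fun _ => Matrix (Fin 3) (Fin m) ℤ) x z) := by
  refine ⟨?_, fun d hd => ?_, ?_, fun j => ?_⟩
  · rw [Fin.forall_fin_succ']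
    simp [H.pos]
  · rw [Fin.forall_fin_succ'] at hd
    simp only [Fin.snoc_castSucc, Fin.snoc_last] at hd
    rcases (Nat.dvd_prime (by norm_num)).mp hd.2 with h1 | rfl
    · exact h1
    · exact absurd (Finset.dvd_sum fun i _ => hd.1 i) hdvd
  · ext a b
    have := H.rel a b
    simpa [Fin.sum_univ_castSucc, Matrix.sum_apply] using this
  · rw [Fintype.linearIndependent_iff]
    intro g hg
    -- A relation omitting `j` is extended by the coefficient `0` at `j`.
    set c : Fin (n + 1) → ℚ := fun i => if hi : i ≠ j then g ⟨i, hi⟩ else 0 with hc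
    have hcj : c j = 0 := by simp [hc]
    have hci : ∀ i : {i // i ≠ j}, c i.1 = g i := fun i => by simp [hc, i.2]
    obtain ⟨t, ht, hd⟩ := H.unique (fun i => c i.castSucc) (c (Fin.last n)) (fun a b => by
      have h1 := congrFun (congrFun hg a) b
      have h2 := Fintype.sum_eq_add_sum_subtype_ne (fun i => c i *
        ((Fin.snoc (α := fun _ => Matrix (Fin 3) (Fin m) ℤ) x z i a b : ℤ) : ℚ)) j
      simp only [hcj, hci, zero_mul, zero_add] at h2
      simp only [Matrix.sum_apply, Matrix.smul_apply, Matrix.map_apply, smul_eq_mul,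
        Matrix.zero_apply] at h1
      rw [h1, Fin.sum_univ_castSucc] at h2
      simpa only [Fin.snoc_castSucc, Fin.snoc_last] using h2)
    have ht0 : t = 0 := by
      induction j using Fin.lastCases with
      | last => linarith
      | cast j =>
        have hj := ht j
        have hp : (h j : ℚ) ≠ 0 := by exact_mod_cast (H.pos j).ne'
        rw [hcj] at hj
        exact (mul_eq_zero.mp hj.symm).resolve_right hp
    have hall : ∀ i, c i = 0 := by
      rw [Fin.forall_fin_succ']
      exact ⟨fun i => by simp [ht, ht0], by simp [hd, ht0]⟩
    intro i
    rw [← hci i, hall]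

/-- For every `m ≥ 4` there are `2m-1` circuits of `K_{3,m}`, the last being
`(a,u_{m-2},b,u_{m-1},c,u_m)`, satisfying a primitive relation `Σ hᵢ xᵢ = 0`
with last coefficient `7` and `Σ hᵢ = 17·2^{m-3} - 7`. -/
theorem exists_primitive_relation (m : ℕ) (hm : 4 ≤ m) :
    ∃ (x : Fin (2 * m - 1) → Matrix (Fin 3) (Fin m) ℤ) (h : Fin (2 * m - 1) → ℕ),
      (∀ i, IsCircuit3m (x i)) ∧
      IsPrimitiveRelMat h x ∧
      x ⟨2 * m - 2, by omega⟩ = cmat ⟨m - 3, by omega⟩ ⟨m - 2, by omega⟩ ⟨m - 1, by omega⟩ ∧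
      h ⟨2 * m - 2, by omega⟩ = 7 ∧
      ∑ i, h i = 17 * 2 ^ (m - 3) - 7 := by
  obtain ⟨k, rfl⟩ : ∃ k, m = k + 4 := ⟨m - 4, by omega⟩
  obtain ⟨x, h, H, hsum⟩ := exists_relData k
  have hdvd : ¬ 7 ∣ ∑ i, h i := by
    intro h7
    have h8 : 7 ∣ 17 * 2 ^ (k + 1) := hsum ▸ Dvd.dvd.add h7 (by norm_num)
    rcases (Nat.Prime.dvd_mul (by norm_num)).mp h8 with h9 | h9
    · omega
    · have := Nat.Prime.dvd_of_dvd_pow (by norm_num) h9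
      omega
  refine ⟨Fin.snoc (n := 2 * k + 6) (α := fun _ => Matrix (Fin 3) (Fin (k + 4)) ℤ) x
      (cmat ⟨k + 1, by omega⟩ ⟨k + 2, by omega⟩ ⟨k + 3, by omega⟩),
    Fin.snoc (n := 2 * k + 6) (α := fun _ => ℕ) h 7, ?_, H.isPrimitive hdvd,
    Fin.snoc_last (n := 2 * k + 6) .., Fin.snoc_last (n := 2 * k + 6) .., ?_⟩
  · refine (Fin.forall_fin_succ' (n := 2 * k + 6)).mpr ⟨fun i => ?_, ?_⟩
    · rw [Fin.snoc_castSucc]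
      exact (H.hexagon i).isCircuit
    · rw [Fin.snoc_last]
      exact IsHexagon.isCircuit ⟨_, _, _, by simp, by simp, by simp, .inl rfl⟩
  · refine (Fin.sum_univ_castSucc (n := 2 * k + 6) _).trans ?_
    simp only [Fin.snoc_castSucc, Fin.snoc_last]
    have : k + 4 - 3 = k + 1 := by omega
    rw [this]
    omega
end

section
/- The Graver complexity g(m) of the incidence matrix of the complete bipartite graph K_{3,m} satisfies g(m) ≥ 17·2^{m−3} − 7 for every m > 3. -/
/-!
The Graver basis of `K_{3,m}` contains the alternating vectors of 6-cycles (`IsHex`). If `x i` are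
such vectors and `h` is a positive relation `∑ i, h i • x i = 0` of which every integer relation is
an integer multiple, then stacking `h i` copies of each `x i` gives a Graver basis element of the
`∑ i, h i`-fold product: a vector `y ⊑` this stack is made of some of its blocks and of zero blocks
(each block being itself `⊑`-minimal), so it yields a relation `0 ≤ g ≤ h`, and `g ∈ {0, h}`
(`le_graverComplexity_of_relation`).

Relations of total weight `17 * 2 ^ (m - 3) - 7` are built by induction on `m`, always keeping a
6-cycle `H` of coefficient 7. For `m = 4` seven explicit 6-cycles do. In the step, the columns of
`H` being `C₁, C₂, C₃` (with sum zero), the identity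
`[C₁, C₂, 0, C₃] + [C₁, 0, C₃, C₂] + [0, C₂, C₃, C₁] = 2 [C₁, C₂, C₃, 0]`
allows one to double all coefficients and to trade `14 H` for `7` times each of three 6-cycles through
the new vertex. The weight goes from `s` to `2 (s - 7) + 21 = 2 s + 7`. The new relation still
generates all integer relations: the new column forces equal coefficients `c` on the three
6-cycles, and the old relation then gives `2 c = 7 t`, hence `t` is even.
-/

/-- The partial order `⊑` on `ℤ^n`: `u ⊑ v` iff `|u i| ≤ |v i|` and `u i * v i ≥ 0` for all `i`. -/
def sqle {n : Type*} (u v : n → ℤ) : Prop :=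
  ∀ i, |u i| ≤ |v i| ∧ 0 ≤ u i * v i

/-- The Graver basis of an integer matrix `A`: the `⊑`-minimal elements of the set of
nonzero integer vectors in the kernel of `A`. -/
def graverBasis {R C : Type*} [Fintype R] [Fintype C] (A : Matrix R C ℤ) : Set (C → ℤ) :=
  {x | A.mulVec x = 0 ∧ x ≠ 0 ∧ ∀ y : C → ℤ, A.mulVec y = 0 → y ≠ 0 → sqle y x → y = x}

/-- The vertex-edge incidence matrix of the complete bipartite graph `K_{3,m}`,
with rows indexed by vertices `{a,b,c} ⊎ {u_1,…,u_m}` and columns by edges. -/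
def incK3 (m : ℕ) : Matrix (Fin 3 ⊕ Fin m) (Fin 3 × Fin m) ℤ :=
  fun v e =>
    match v with
    | Sum.inl a => if a = e.1 then 1 else 0
    | Sum.inr u => if u = e.2 then 1 else 0

/-- The `n`-fold product `A^{(n)} = (1_n ⊗ I_t) ⊕ (I_n ⊗ A)` of an integer matrix `A`. -/
def nfold {R C : Type*} [DecidableEq C] (A : Matrix R C ℤ) (n : ℕ) :
    Matrix (C ⊕ (Fin n × R)) (Fin n × C) ℤ :=
  fun r c =>
    match r with
    | Sum.inl j => if j = c.2 then 1 else 0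
    | Sum.inr (i, r') => if i = c.1 then A r' c.2 else 0

/-- The type of `x ∈ ℤ^{n·t}`: the number of nonzero blocks of `x`. -/
noncomputable def blockType {n : ℕ} {C : Type*} (x : Fin n × C → ℤ) : ℕ :=
  Nat.card {i : Fin n // ∃ j, x (i, j) ≠ 0}

/-- The Graver complexity of `A`: the supremum of the types of elements of the
Graver bases of all the `n`-fold products `A^{(n)}`, `n ≥ 1` (and `0` if all are empty). -/
noncomputable def graverComplexity {R C : Type*} [Fintype R] [Fintype C] [DecidableEq C]
    (A : Matrix R C ℤ) : ℕ∞ :=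
  ⨆ (n : ℕ) (x ∈ graverBasis (nfold A (n + 1))), (blockType x : ℕ∞)

/-! ### 6-cycles of `K_{3,m}` -/

/-- The alternating vector (up to the sign `ε`) of a 6-cycle through the vertices `u_p, u_q, u_r`,
written as a table with 3 rows and infinitely many columns: its columns `p`, `q`, `r` are
`(1,0,-1)`, `(-1,1,0)`, `(0,-1,1)`. Columns are indexed by `ℕ` so that the same vector lives on
every large enough `K_{3,m}`. -/
def hex (ε : ℤ) (p q r : ℕ) (a : Fin 3) (j : ℕ) : ℤ :=
  ε * ((if j = p then ![1, 0, -1] a else 0) + (if j = q then ![-1, 1, 0] a else 0)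
    + (if j = r then ![0, -1, 1] a else 0))

/-- `v` is the alternating vector of an oriented 6-cycle of `K_{3,m}`. -/
def IsHex (m : ℕ) (v : Fin 3 → ℕ → ℤ) : Prop :=
  ∃ ε p q r, (ε = 1 ∨ ε = -1) ∧ p < m ∧ q < m ∧ r < m ∧ p ≠ q ∧ p ≠ r ∧ q ≠ r ∧ v = hex ε p q r

lemma incK3_mulVec_eq_zero {m : ℕ} (z : Fin 3 × Fin m → ℤ) :
    (incK3 m).mulVec z = 0 ↔ (∀ a, ∑ j, z (a, j) = 0) ∧ ∀ j, ∑ a, z (a, j) = 0 := by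
  have h1 : ∀ a, (incK3 m).mulVec z (Sum.inl a) = ∑ j, z (a, j) := by
    intro a
    simp only [Matrix.mulVec, dotProduct, incK3, Fintype.sum_prod_type, ite_mul, one_mul, zero_mul]
    rw [Finset.sum_comm]
    simp
  have h2 : ∀ j, (incK3 m).mulVec z (Sum.inr j) = ∑ a, z (a, j) := by
    intro j
    simp [Matrix.mulVec, dotProduct, incK3, Fintype.sum_prod_type]
  simp [funext_iff, h1, h2]

lemma nfold_mulVec_eq_zero {R C : Type*} [Fintype R] [Fintype C] [DecidableEq C]
    (A : Matrix R C ℤ) (n : ℕ) (y : Fin n × C → ℤ) :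
    (nfold A n).mulVec y = 0 ↔
      (∀ c, ∑ k, y (k, c) = 0) ∧ ∀ k, A.mulVec (fun c => y (k, c)) = 0 := by
  have h1 : ∀ c, (nfold A n).mulVec y (Sum.inl c) = ∑ k, y (k, c) := by
    intro c
    simp [Matrix.mulVec, dotProduct, nfold, Fintype.sum_prod_type]
  have h2 : ∀ k r, (nfold A n).mulVec y (Sum.inr (k, r)) = A.mulVec (fun c => y (k, c)) r := by
    intro k r
    simp only [Matrix.mulVec, dotProduct, nfold, Fintype.sum_prod_type, ite_mul, zero_mul]
    rw [Finset.sum_comm]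
    simp
  simp [funext_iff, h1, h2]

lemma IsHex.mono {m : ℕ} {v : Fin 3 → ℕ → ℤ} (hv : IsHex m v) : IsHex (m + 1) v := by
  obtain ⟨ε, p, q, r, h, h1, h2, h3, h4⟩ := hv
  exact ⟨ε, p, q, r, h, by omega, by omega, by omega, h4⟩

lemma IsHex.eq_zero {m : ℕ} {v : Fin 3 → ℕ → ℤ} (hv : IsHex m v) (a : Fin 3) : v a m = 0 := by
  obtain ⟨ε, p, q, r, -, h1, h2, h3, -, -, -, rfl⟩ := hv
  simp [hex, h1.ne', h2.ne', h3.ne']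

lemma IsHex.ne_zero {m : ℕ} {v : Fin 3 → ℕ → ℤ} (hv : IsHex m v) :
    ∃ (a : Fin 3) (j : Fin m), v a j ≠ 0 := by
  obtain ⟨ε, p, q, r, h, h1, h2, h3, h4, h5, h6, rfl⟩ := hv
  refine ⟨0, ⟨p, h1⟩, ?_⟩
  rcases h with rfl | rfl <;> simp [hex, h4]

lemma IsHex.mem_ker {m : ℕ} {v : Fin 3 → ℕ → ℤ} (hv : IsHex m v) :
    (incK3 m).mulVec (fun c => v c.1 c.2) = 0 := by
  obtain ⟨ε, p, q, r, h, h1, h2, h3, -, -, -, rfl⟩ := hv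
  obtain ⟨P, rfl⟩ : ∃ P : Fin m, (P : ℕ) = p := ⟨⟨p, h1⟩, rfl⟩
  obtain ⟨Q, rfl⟩ : ∃ P : Fin m, (P : ℕ) = q := ⟨⟨q, h2⟩, rfl⟩
  obtain ⟨R, rfl⟩ : ∃ P : Fin m, (P : ℕ) = r := ⟨⟨r, h3⟩, rfl⟩
  rw [incK3_mulVec_eq_zero]
  constructor
  · intro a
    simp only [hex, Fin.val_inj, ← Finset.mul_sum, Finset.sum_add_distrib, Finset.sum_ite_eq',
      Finset.mem_univ, if_true]
    fin_cases a <;> simp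
  · intro j
    simp only [hex, Fin.sum_univ_three]
    split_ifs <;> simp

/-- Minimality of 6-cycles: a kernel vector `⊑` a 6-cycle is `0` or the whole 6-cycle. -/
lemma IsHex.minimal {m : ℕ} {v : Fin 3 → ℕ → ℤ} (hv : IsHex m v) (y : Fin 3 × Fin m → ℤ)
    (hy : (incK3 m).mulVec y = 0) (hle : sqle y (fun c => v c.1 c.2)) :
    ∃ w : ℤ, (w = 0 ∨ w = 1) ∧ ∀ a j, y (a, j) = w * v a j := by
  obtain ⟨ε, p, q, r, h, h1, h2, h3, h4, h5, h6, rfl⟩ := hv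
  obtain ⟨P, rfl⟩ : ∃ P : Fin m, (P : ℕ) = p := ⟨⟨p, h1⟩, rfl⟩
  obtain ⟨Q, rfl⟩ : ∃ P : Fin m, (P : ℕ) = q := ⟨⟨q, h2⟩, rfl⟩
  obtain ⟨R, rfl⟩ : ∃ P : Fin m, (P : ℕ) = r := ⟨⟨r, h3⟩, rfl⟩
  rw [incK3_mulVec_eq_zero] at hy
  obtain ⟨hrow, hcol⟩ := hy
  have hPQ : P ≠ Q := fun e => h4 (by rw [e])
  have hPR : P ≠ R := fun e => h5 (by rw [e])
  have hQR : Q ≠ R := fun e => h6 (by rw [e])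
  have hoff : ∀ a j, j ≠ P → j ≠ Q → j ≠ R → y (a, j) = 0 := by
    intro a j e1 e2 e3
    have := (hle (a, j)).1
    simpa [hex, Fin.val_inj, e1, e2, e3] using this
  have hrow' : ∀ a, y (a, P) + y (a, Q) + y (a, R) = 0 := by
    intro a
    rw [← hrow a, ← Finset.sum_subset (Finset.subset_univ {P, Q, R})]
    · rw [Finset.sum_insert (by simp [hPQ, hPR]), Finset.sum_pair hQR, add_assoc]
    · intro j _ hj
      simp only [Finset.mem_insert, Finset.mem_singleton, not_or] at hj
      exact hoff a j hj.1 hj.2.1 hj.2.2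
  simp only [Fin.sum_univ_three] at hcol
  have c1 := hcol P
  have c2 := hcol Q
  have c3 := hcol R
  have r0 := hrow' 0
  have r1 := hrow' 1
  have r2 := hrow' 2
  have b1 := hle (0, P)
  have z1 := (hle (1, P)).1
  have z2 := (hle (2, Q)).1
  have z3 := (hle (0, R)).1
  simp [hex, Fin.val_inj, hPQ, hPR, hQR, hPQ.symm, hPR.symm, hQR.symm] at b1 z1 z2 z3
  refine ⟨ε * y (0, P), ?_, ?_⟩
  · obtain ⟨b1, b2⟩ := b1
    rcases h with rfl | rfl <;> simp [abs_le] at b1 b2 ⊢ <;> omega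
  · intro a j
    have hε : ε * ε = 1 := by rcases h with rfl | rfl <;> norm_num
    have key : ε * y (0, P) * hex ε P Q R a j = y (0, P) * hex 1 P Q R a j := by
      simp only [hex]
      linear_combination (y (0, P) * ((if (j : ℕ) = P then ![1, 0, -1] a else 0) +
        (if (j : ℕ) = Q then ![-1, 1, 0] a else 0) +
        (if (j : ℕ) = R then ![0, -1, 1] a else 0))) * hε
    rw [key]
    by_cases e1 : j = P
    · subst e1
      fin_cases a <;> simp [hex, Fin.val_inj, hPQ, hPR] <;> omega
    by_cases e2 : j = Q
    · subst e2
      fin_cases a <;> simp [hex, Fin.val_inj, hPQ.symm, hQR] <;> omega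
    by_cases e3 : j = R
    · subst e3
      fin_cases a <;> simp [hex, Fin.val_inj, hPR.symm, hQR.symm] <;> omega
    rw [hoff a j e1 e2 e3]
    simp [hex, Fin.val_inj, e1, e2, e3]

/-! ### From relations between 6-cycles to Graver complexity -/

lemma le_graverComplexity_of_relation {m : ℕ} {ι : Type} [Fintype ι] (x : ι → Fin 3 → ℕ → ℤ)
    (h : ι → ℕ) (i₀ : ι) (hi₀ : h i₀ ≠ 0) (hx : ∀ i, IsHex m (x i))
    (hrel : ∀ a j, ∑ i, (h i : ℤ) * x i a j = 0)
    (hgen : ∀ g : ι → ℤ, (∀ a j, ∑ i, g i * x i a j = 0) → ∃ t : ℤ, ∀ i, g i = t * h i) :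
    ((∑ i, h i : ℕ) : ℕ∞) ≤ graverComplexity (incK3 m) := by
  classical
  obtain ⟨n, hn⟩ : ∃ n, ∑ i, h i = n + 1 := by
    refine Nat.exists_eq_succ_of_ne_zero fun h0 => hi₀ ?_
    exact (Finset.sum_eq_zero_iff.1 h0) i₀ (Finset.mem_univ _)
  -- Block `k` of the stacked vector is the copy of `x i` numbered by `e k = ⟨i, _⟩`.
  obtain ⟨e⟩ : Nonempty (Fin (n + 1) ≃ Σ i, Fin (h i)) := by
    refine Fintype.card_eq.1 ?_
    simp [hn]
  let X : Fin (n + 1) × (Fin 3 × Fin m) → ℤ := fun c => x (e c.1).1 c.2.1 c.2.2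
  have hXne : ∀ k, ∃ c, X (k, c) ≠ 0 := by
    intro k
    obtain ⟨a, j, haj⟩ := (hx (e k).1).ne_zero
    exact ⟨(a, j), haj⟩
  have htype : blockType X = n + 1 := by
    unfold blockType
    rw [Nat.card_congr (Equiv.subtypeUnivEquiv hXne)]
    simp
  have hmem : X ∈ graverBasis (nfold (incK3 m) (n + 1)) := by
    refine ⟨?_, ?_, ?_⟩
    · rw [nfold_mulVec_eq_zero]
      refine ⟨?_, fun k => (hx (e k).1).mem_ker⟩
      rintro ⟨a, j⟩
      rw [← hrel a j]
      change ∑ k, x (e k).1 a j = _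
      rw [Equiv.sum_comp e (fun s => x s.1 a j), Fintype.sum_sigma]
      simp
    · intro h0
      obtain ⟨c, hc⟩ := hXne 0
      exact hc (congrFun h0 _)
    · intro y hy hy0 hle
      rw [nfold_mulVec_eq_zero] at hy
      have hb : ∀ k, ∃ w : ℤ, (w = 0 ∨ w = 1) ∧ ∀ a j, y (k, (a, j)) = w * x (e k).1 a j :=
        fun k => (hx (e k).1).minimal _ (hy.2 k) fun c => hle (k, c)
      choose w hw hyw using hb
      have hw0 : ∀ k, 0 ≤ w k := fun k => by rcases hw k with h | h <;> omega
      have hw1 : ∀ k, 0 ≤ 1 - w k := fun k => by rcases hw k with h | h <;> omega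
      obtain ⟨t, ht⟩ := hgen (fun i => ∑ f : Fin (h i), w (e.symm ⟨i, f⟩)) (by
        intro a j
        by_cases hj : j < m
        · have := hy.1 (a, ⟨j, hj⟩)
          simp only [hyw] at this
          rw [← this, ← Equiv.sum_comp e.symm, Fintype.sum_sigma]
          simp [Finset.sum_mul]
        · refine Finset.sum_eq_zero fun i _ => ?_
          obtain ⟨ε, p, q, r, -, h1, h2, h3, -, -, -, hi⟩ := hx i
          have e1 : j ≠ p := by omega
          have e2 : j ≠ q := by omega
          have e3 : j ≠ r := by omega
          simp [hi, hex, e1, e2, e3])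
      have hpos : (0 : ℤ) < h i₀ := by omega
      have ht0 : 0 ≤ t := by
        have : 0 ≤ t * h i₀ := by
          rw [← ht]
          exact Finset.sum_nonneg fun _ _ => hw0 _
        exact nonneg_of_mul_nonneg_left this hpos
      have hsub : ∀ i, ∑ f : Fin (h i), (1 - w (e.symm ⟨i, f⟩)) = (1 - t) * h i := by
        intro i
        rw [Finset.sum_sub_distrib, ht]
        simp
        ring
      have ht1 : 0 ≤ 1 - t := by
        have : 0 ≤ (1 - t) * h i₀ := by
          rw [← hsub]
          exact Finset.sum_nonneg fun _ _ => hw1 _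
        exact nonneg_of_mul_nonneg_left this hpos
      obtain rfl | rfl : t = 0 ∨ t = 1 := by omega
      · refine absurd ?_ hy0
        ext ⟨k, a, j⟩
        have h2 := ht (e k).1
        rw [zero_mul, Finset.sum_eq_zero_iff_of_nonneg fun _ _ => hw0 _] at h2
        have h3 := h2 (e k).2 (Finset.mem_univ _)
        simp only [Sigma.eta, Equiv.symm_apply_apply] at h3
        simp [hyw, h3]
      · ext ⟨k, a, j⟩
        have h2 := hsub (e k).1
        rw [sub_self, zero_mul, Finset.sum_eq_zero_iff_of_nonneg fun _ _ => hw1 _] at h2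
        have h3 := h2 (e k).2 (Finset.mem_univ _)
        simp only [Sigma.eta, Equiv.symm_apply_apply] at h3
        have h4 : w k = 1 := by omega
        simp [hyw, h4, X]
  rw [hn, ← htype]
  exact le_iSup_of_le n (le_iSup₂_of_le X hmem le_rfl)

/-! ### The recursive construction -/

/-- There is a relation between 6-cycles of `K_{3,m}`, of total weight `s`, which generates all
integer relations between them and in which some 6-cycle `hex 1 p q r` has coefficient `7`. That
6-cycle is kept apart from the family `x` of the other ones, with coefficients `h`. -/
def HasRelation (m s : ℕ) : Prop :=
  ∃ (ι : Type) (_ : Fintype ι) (x : ι → Fin 3 → ℕ → ℤ) (h : ι → ℕ) (p q r : ℕ),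
    (∀ i, IsHex m (x i)) ∧ p < m ∧ q < m ∧ r < m ∧ p ≠ q ∧ p ≠ r ∧ q ≠ r ∧
    7 + ∑ i, h i = s ∧
    (∀ a j, 7 * hex 1 p q r a j + ∑ i, (h i : ℤ) * x i a j = 0) ∧
    ∀ (c : ℤ) (g : ι → ℤ), (∀ a j, c * hex 1 p q r a j + ∑ i, g i * x i a j = 0) →
      ∃ t : ℤ, c = t * 7 ∧ ∀ i, g i = t * h i

lemma HasRelation.le_graverComplexity {m s : ℕ} (hs : HasRelation m s) :
    (s : ℕ∞) ≤ graverComplexity (incK3 m) := by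
  obtain ⟨ι, _, x, h, p, q, r, hx, hp, hq, hr, hpq, hpr, hqr, rfl, hrel, hgen⟩ := hs
  have := le_graverComplexity_of_relation (m := m) (ι := Option ι)
    (fun o => o.elim (hex 1 p q r) x) (fun o => o.elim 7 h) none (by simp)
    (by
      rintro (_ | i)
      · exact ⟨1, p, q, r, Or.inl rfl, hp, hq, hr, hpq, hpr, hqr, rfl⟩
      · exact hx i)
    (by
      intro a j
      simpa [Fintype.sum_option] using hrel a j)
    (by
      intro g hg
      obtain ⟨t, h1, h2⟩ := hgen (g none) (fun i => g (some i)) (by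
        intro a j
        simpa [Fintype.sum_option] using hg a j)
      refine ⟨t, ?_⟩
      rintro (_ | i)
      · simpa using h1
      · simpa using h2 i)
  simpa [Fintype.sum_option] using this

lemma hasRelation_four : HasRelation 4 27 := by
  refine ⟨Fin 6, inferInstance, ![hex (-1) 2 0 1, hex 1 1 0 3, hex 1 1 3 0, hex 1 2 1 0,
    hex 1 3 0 2, hex (-1) 3 2 0], ![1, 3, 3, 6, 5, 2], 0, 2, 1, ?_, by norm_num, by norm_num,
    by norm_num, by norm_num, by norm_num, by norm_num, by decide, ?_, ?_⟩
  · intro i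
    fin_cases i
    · exact ⟨-1, 2, 0, 1, by norm_num, by norm_num, by norm_num, by norm_num, by norm_num,
        by norm_num, by norm_num, rfl⟩
    · exact ⟨1, 1, 0, 3, by norm_num, by norm_num, by norm_num, by norm_num, by norm_num,
        by norm_num, by norm_num, rfl⟩
    · exact ⟨1, 1, 3, 0, by norm_num, by norm_num, by norm_num, by norm_num, by norm_num,
        by norm_num, by norm_num, rfl⟩
    · exact ⟨1, 2, 1, 0, by norm_num, by norm_num, by norm_num, by norm_num, by norm_num,
        by norm_num, by norm_num, rfl⟩
    · exact ⟨1, 3, 0, 2, by norm_num, by norm_num, by norm_num, by norm_num, by norm_num,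
        by norm_num, by norm_num, rfl⟩
    · exact ⟨-1, 3, 2, 0, by norm_num, by norm_num, by norm_num, by norm_num, by norm_num,
        by norm_num, by norm_num, rfl⟩
  · intro a j
    rcases j with _ | _ | _ | _ | j <;> fin_cases a <;> simp [Fin.sum_univ_six, hex]
  · intro c g hg
    have h00 := hg 0 0
    have h01 := hg 0 1
    have h02 := hg 0 2
    have h10 := hg 1 0
    have h11 := hg 1 1
    have h12 := hg 1 2
    simp [Fin.sum_univ_six, hex] at h00 h01 h02 h10 h11 h12
    refine ⟨g 0, by omega, fun i => ?_⟩
    fin_cases i <;> simp <;> omega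

/-- The doubling step: `14 • hex 1 p q r` is traded for `7` times each of `hex 1 p q m`,
`hex 1 p m r` and `hex 1 m q r`, where `m` is the new column. -/
lemma HasRelation.succ {m s : ℕ} (hs : HasRelation m s) : HasRelation (m + 1) (2 * s + 7) := by
  obtain ⟨ι, _, x, h, p, q, r, hx, hp, hq, hr, hpq, hpr, hqr, rfl, hrel, hgen⟩ := hs
  have hsum : ∀ a j, hex 1 p q m a j + hex 1 p m r a j + hex 1 m q r a j
      = 2 * hex 1 p q r a j := by
    intro a j
    have hC : (if j = m then ![(1 : ℤ), 0, -1] a else 0) + (if j = m then ![(-1 : ℤ), 1, 0] a else 0)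
        + (if j = m then ![(0 : ℤ), -1, 1] a else 0) = 0 := by
      split_ifs <;> fin_cases a <;> simp
    simp only [hex]
    linear_combination hC
  refine ⟨Option (Option ι), inferInstance,
    fun o => o.elim (hex 1 p m r) (fun o' => o'.elim (hex 1 m q r) x),
    fun o => o.elim 7 (fun o' => o'.elim 7 (fun i => 2 * h i)), p, q, m, ?_, by omega, by omega,
    by omega, hpq, by omega, by omega, ?_, ?_, ?_⟩
  · rintro (_ | _ | i)
    · exact ⟨1, p, m, r, Or.inl rfl, by omega, by omega, by omega, by omega, by omega, by omega,
        rfl⟩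
    · exact ⟨1, m, q, r, Or.inl rfl, by omega, by omega, by omega, by omega, by omega, by omega,
        rfl⟩
    · exact (hx i).mono
  · simp only [Fintype.sum_option, Option.elim, ← Finset.mul_sum]
    ring
  · intro a j
    simp only [Fintype.sum_option, Option.elim]
    push_cast
    simp only [mul_assoc, ← Finset.mul_sum]
    linear_combination 7 * hsum a j + 2 * hrel a j
  · intro c g hg
    simp only [Fintype.sum_option, Option.elim] at hg
    have hold : ∀ a, ∑ i, g (some (some i)) * x i a m = 0 := fun a =>
      Finset.sum_eq_zero fun i _ => by rw [(hx i).eq_zero, mul_zero]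
    -- On the new column the three new 6-cycles are the three columns of a hexagon, whose only
    -- relation is that they sum to zero.
    have e0 := hg 0 m
    have e1 := hg 1 m
    rw [hold] at e0 e1
    simp [hex, hp.ne', hq.ne', hr.ne'] at e0 e1
    have g1 : g none = c := by omega
    have g2 : g (some none) = c := by omega
    obtain ⟨t, ht, hgt⟩ := hgen (2 * c) (fun i => g (some (some i))) (by
      intro a j
      have := hg a j
      rw [g1, g2] at this
      linear_combination this - c * hsum a j)
    obtain ⟨u, rfl⟩ : ∃ u, t = 2 * u := ⟨t / 2, by omega⟩
    refine ⟨u, by omega, ?_⟩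
    rintro (_ | _ | i)
    · simp only [Option.elim]
      push_cast
      omega
    · simp only [Option.elim]
      push_cast
      omega
    · simp only [Option.elim, hgt i]
      push_cast
      ring

lemma hasRelation_add_four (n : ℕ) : HasRelation (n + 4) (34 * 2 ^ n - 7) := by
  induction n with
  | zero => exact hasRelation_four
  | succ n ih =>
    have h2 : 1 ≤ 2 ^ n := Nat.one_le_two_pow
    have h3 : 34 * 2 ^ (n + 1) - 7 = 2 * (34 * 2 ^ n - 7) + 7 := by
      rw [pow_succ]
      omega
    rw [h3]
    exact ih.succ

/-- The Graver complexity of the incidence matrix of `K_{3,m}` satisfies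
`g(m) ≥ 17·2^{m-3} - 7` for every `m > 3`. -/
theorem graverComplexity_lower_bound (m : ℕ) (hm : 3 < m) :
    ((17 * 2 ^ (m - 3) - 7 : ℕ) : ℕ∞) ≤ graverComplexity (incK3 m) := by
  obtain ⟨n, rfl⟩ : ∃ n, m = n + 4 := ⟨m - 4, by omega⟩
  have h := (hasRelation_add_four n).le_graverComplexity
  have h3 : 17 * 2 ^ (n + 4 - 3) = 34 * 2 ^ n := by
    rw [show n + 4 - 3 = n + 1 by omega, pow_succ]
    ring
  rwa [h3]
end
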